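/- Let D be a digraph, S ⊆ V(D), and suppose D⟨S⟩ is semicomplete. If D is S-strong (for every pair of distinct vertices of S there are directed paths in both directions in D) and D contains a closed directed trail meeting S, then D contains a closed directed trail through all vertices of S. -/

import Mathlib

/-- A directed walk: consecutive vertices are joined by arcs. -/
def IsDiwalk {V : Type*} (A : V → V → Prop) : List V → Prop
  | [] => True
  | [_] => True
  | a :: b :: l => A a b ∧ IsDiwalk A (b :: l)

/-- The list of arcs traversed by a walk given as a vertex list. -/
def arcList {V : Type*} (l : List V) : List (V × V) := l.zip l.tail

/-- A directed trail: a directed walk with no repeated arcs. -/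
def IsDitrail {V : Type*} (A : V → V → Prop) (l : List V) : Prop :=
  IsDiwalk A l ∧ (arcList l).Nodup

/-- A closed directed trail: a directed trail whose first and last vertices coincide. -/
def IsClosedDitrail {V : Type*} (A : V → V → Prop) (l : List V) : Prop :=
  IsDitrail A l ∧ l.head? = l.getLast?

/-- A directed path from `u` to `v` (no repeated vertices). -/
def IsDipathFrom {V : Type*} (A : V → V → Prop) (u v : V) (l : List V) : Prop :=
  IsDiwalk A l ∧ l.Nodup ∧ l.head? = some u ∧ l.getLast? = some v

/-- Reachability by a directed path. -/
def DiReach {V : Type*} (A : V → V → Prop) (u v : V) : Prop :=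
  ∃ l, IsDipathFrom A u v l

/-!
A closed ditrail `T` through part of `S` can be enlarged by any vertex `v` of `S` not on it. Up to
reversing all arcs, some vertex `s` of `S` on `T` dominates `v`. Follow `T` from `s` to the first
vertex `x` at which a dipath leaving `v` can enter `T`, and let `y` be the last vertex on the way,
possibly `x` itself, that dominates `v`. A vertex of `S` strictly between `y` and `x` would neither
dominate `v` nor be dominated by it, contradicting semicompleteness, so the segment of `T` from `y`
to `x` can be replaced by the arc from `y` to `v` and that dipath without losing any vertex of `S`.
-/

section Split

variable {α : Type*}

theorem exists_split_at_first {P : α → Prop} {l : List α} (h : ∃ x ∈ l, P x) :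
    ∃ p x q, l = p ++ x :: q ∧ P x ∧ ∀ u ∈ p, ¬ P u := by
  classical
  have hfind : (l.find? (P ·)).isSome := List.find?_isSome.2 (by simpa using h)
  obtain ⟨x, hx⟩ := Option.isSome_iff_exists.1 hfind
  obtain ⟨hPx, p, q, rfl, hp⟩ := List.find?_eq_some_iff_append.1 hx
  exact ⟨p, x, q, rfl, by simpa using hPx, by simpa using hp⟩

theorem exists_split_at_last {P : α → Prop} {l : List α} (h : ∃ x ∈ l, P x) :
    ∃ p x q, l = p ++ x :: q ∧ P x ∧ ∀ u ∈ q, ¬ P u := by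
  obtain ⟨q, x, p, hl, hx, hq⟩ := exists_split_at_first (l := l.reverse) (by simpa using h)
  refine ⟨p.reverse, x, q.reverse, ?_, hx, by simpa using hq⟩
  simpa using congrArg List.reverse hl

theorem exists_segment_last_to_first {P Q : α → Prop} {s : α} {l : List α} (hs : P s)
    (hQ : ∃ x ∈ s :: l, Q x) :
    ∃ p x q r y m, s :: l = p ++ x :: q ∧ p ++ [x] = r ++ y :: m ∧ P y ∧ Q x ∧
      ∀ u ∈ m, P u ∨ Q u → u = x := by
  obtain ⟨p, x, q, hl, hx, hp⟩ := exists_split_at_first hQ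
  have hsp : s ∈ p ++ [x] := by
    cases p <;> simp_all
  obtain ⟨r, y, m, hseg, hy, hm⟩ := exists_split_at_last ⟨s, hsp, hs⟩
  refine ⟨p, x, q, r, y, m, hl, hseg, hy, hx, fun u hu huPQ => ?_⟩
  have hup : u ∈ p ++ [x] := by simp [hseg, hu]
  have hQu : Q u := huPQ.resolve_left (hm u hu)
  exact List.mem_singleton.1 ((List.mem_append.1 hup).resolve_left fun h => hp u h hQu)

end Split

section Ditrails

variable {V : Type*} {A : V → V → Prop}

theorem map_fst_arcList (l : List V) : (arcList l).map Prod.fst = l.dropLast := by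
  induction l with
  | nil => rfl
  | cons a l ih => cases l <;> simp_all [arcList]

theorem map_snd_arcList (l : List V) : (arcList l).map Prod.snd = l.tail :=
  List.map_snd_zip (by simp)

theorem mem_of_mem_arcList {l : List V} {e : V × V} (h : e ∈ arcList l) : e.1 ∈ l ∧ e.2 ∈ l :=
  ⟨(List.of_mem_zip h).1, List.mem_of_mem_tail (List.of_mem_zip h).2⟩

theorem nodup_arcList_of_nodup_tail {l : List V} (h : l.tail.Nodup) : (arcList l).Nodup :=
  List.Nodup.of_map Prod.snd (by rwa [map_snd_arcList])

theorem arcList_append_cons (p : List V) (s : V) (q : List V) :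
    arcList (p ++ s :: q) = arcList (p ++ [s]) ++ arcList (s :: q) := by
  induction p with
  | nil => rfl
  | cons a p ih => cases p <;> simp_all [arcList]

theorem arcList_reverse (l : List V) :
    arcList l.reverse = ((arcList l).map Prod.swap).reverse := by
  induction l with
  | nil => rfl
  | cons a l ih =>
    cases l with
    | nil => rfl
    | cons b l =>
      calc arcList (a :: b :: l).reverse
          = arcList (l.reverse ++ b :: [a]) := by simp
        _ = arcList (b :: l).reverse ++ [(b, a)] := by
          rw [arcList_append_cons, List.reverse_cons]; rfl
        _ = ((arcList (a :: b :: l)).map Prod.swap).reverse := by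
          rw [ih]; simp [arcList]

theorem isDiwalk_iff_isChain {l : List V} : IsDiwalk A l ↔ l.IsChain A := by
  induction l with
  | nil => simp [IsDiwalk]
  | cons a l ih => cases l <;> simp_all [IsDiwalk]

theorem isDiwalk_flip_reverse {l : List V} : IsDiwalk (flip A) l.reverse ↔ IsDiwalk A l := by
  simp only [isDiwalk_iff_isChain, List.isChain_reverse, flip]

theorem isDitrail_flip_reverse {l : List V} : IsDitrail (flip A) l.reverse ↔ IsDitrail A l := by
  simp only [IsDitrail, isDiwalk_flip_reverse, arcList_reverse, List.nodup_reverse,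
    List.nodup_map_iff Prod.swap_injective]

theorem isClosedDitrail_flip_reverse {l : List V} :
    IsClosedDitrail (flip A) l.reverse ↔ IsClosedDitrail A l := by
  rw [IsClosedDitrail, IsClosedDitrail, isDitrail_flip_reverse, List.head?_reverse,
    List.getLast?_reverse, eq_comm (a := l.getLast?)]

theorem DiReach.reverse {u v : V} (h : DiReach A u v) : DiReach (flip A) v u := by
  obtain ⟨l, hwalk, hnodup, hhead, hlast⟩ := h
  exact ⟨l.reverse, isDiwalk_flip_reverse.2 hwalk, List.nodup_reverse.2 hnodup,
    by rwa [List.head?_reverse], by rwa [List.getLast?_reverse]⟩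

theorem isDitrail_append_cons {p : List V} {s : V} {q : List V} :
    IsDitrail A (p ++ s :: q) ↔
      IsDitrail A (p ++ [s]) ∧ IsDitrail A (s :: q) ∧
        (arcList (p ++ [s])).Disjoint (arcList (s :: q)) := by
  simp only [IsDitrail, isDiwalk_iff_isChain, List.isChain_split (l₁ := p) (l₂ := q),
    arcList_append_cons p s q, List.nodup_append']
  tauto

theorem IsClosedDitrail.exists_rotate {l : List V} (h : IsClosedDitrail A l) {s : V} (hs : s ∈ l) :
    ∃ q, IsClosedDitrail A (s :: q) ∧ ∀ u, u ∈ s :: q ↔ u ∈ l := by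
  obtain ⟨p, q, rfl⟩ := List.append_of_mem hs
  cases p with
  | nil => exact ⟨q, h, fun _ => Iff.rfl⟩
  | cons a p =>
    obtain ⟨htrail, hclosed⟩ := h
    obtain ⟨q', hq⟩ : ∃ q', s :: q = q' ++ [a] := by
      rw [List.getLast?_append_cons] at hclosed
      exact List.getLast?_eq_some_iff.1 hclosed.symm
    have hrot : s :: (q ++ (p ++ [s])) = q' ++ a :: (p ++ [s]) := by
      rw [← List.cons_append, hq, List.append_assoc, List.singleton_append]
    obtain ⟨hp, hsq, hdisj⟩ := isDitrail_append_cons.1 htrail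
    rw [hq] at hsq hdisj
    refine ⟨q ++ (p ++ [s]), ⟨?_, ?_⟩, fun u => ?_⟩
    · rw [hrot]
      exact isDitrail_append_cons.2 ⟨hsq, hp, hdisj.symm⟩
    · rw [← List.append_assoc, ← List.cons_append, List.getLast?_concat]
      rfl
    · grind

theorem IsClosedDitrail.replace_segment {p q r m W : List V} {x y : V}
    (h : IsClosedDitrail A (p ++ x :: q)) (hseg : p ++ [x] = r ++ y :: m)
    (hW : IsDitrail A (y :: W ++ [x]))
    (hnew : (arcList (y :: W ++ [x])).Disjoint (arcList (p ++ x :: q))) :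
    IsClosedDitrail A (r ++ y :: W ++ x :: q) := by
  obtain ⟨htrail, hclosed⟩ := h
  obtain ⟨hpx, hxq, hdisj⟩ := isDitrail_append_cons.1 htrail
  have harcs : arcList (p ++ [x]) = arcList (r ++ [y]) ++ arcList (y :: m) := by
    rw [hseg, arcList_append_cons]
  rw [harcs, List.disjoint_append_left] at hdisj
  rw [arcList_append_cons p, harcs, List.disjoint_append_right, List.disjoint_append_right] at hnew
  obtain ⟨⟨hnew_left, -⟩, hnew_right⟩ := hnew
  have hleft : IsDitrail A (r ++ [y]) := (isDitrail_append_cons.1 (hseg ▸ hpx)).1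
  refine ⟨isDitrail_append_cons.2 ⟨?_, hxq, ?_⟩, ?_⟩
  · rw [List.append_assoc]
    exact isDitrail_append_cons.2 ⟨hleft, hW, hnew_left.symm⟩
  · rw [List.append_assoc, List.cons_append, arcList_append_cons, List.disjoint_append_left]
    exact ⟨hdisj.1, hnew_right⟩
  · have hhead : (p ++ x :: q).head? = (r ++ y :: W ++ x :: q).head? := by
      have hhead_seg := congrArg List.head? hseg
      cases p <;> cases r <;> simp_all
    rw [← hhead, hclosed, List.getLast?_append_cons, List.getLast?_append_cons]

/-- Some dipath from `v` meets `U` exactly in its last vertex `x`; here `W` is that dipath with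
`x` removed, so that `v ∉ U` and `W` is never empty. -/
def EntersAt (A : V → V → Prop) (U : Set V) (v x : V) : Prop :=
  x ∈ U ∧ ∃ W, W.head? = some v ∧ W.Nodup ∧ (∀ u ∈ W, u ∉ U) ∧ IsDiwalk A (W ++ [x])

theorem EntersAt.of_arc {U : Set V} {v x : V} (hv : v ∉ U) (hx : x ∈ U) (h : A v x) :
    EntersAt A U v x :=
  ⟨hx, [v], rfl, List.nodup_singleton v, by simpa using hv, h, trivial⟩

theorem DiReach.exists_entersAt {U : Set V} {v s : V} (h : DiReach A v s) (hv : v ∉ U)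
    (hs : s ∈ U) : ∃ x, EntersAt A U v x := by
  obtain ⟨l, hwalk, hnodup, hhead, hlast⟩ := h
  obtain ⟨W, x, q, rfl, hx, hW⟩ := exists_split_at_first ⟨s, List.mem_of_getLast? hlast, hs⟩
  refine ⟨x, hx, W, ?_, (List.nodup_append'.1 hnodup).1, hW, ?_⟩
  · cases W with
    | nil => exact absurd (Option.some.inj hhead ▸ hx) hv
    | cons => exact hhead
  · rw [isDiwalk_iff_isChain] at hwalk ⊢
    exact (List.isChain_split.1 hwalk).1

theorem EntersAt.exists_ear {U : Set V} {v x y : V} (h : EntersAt A U v x) (hyv : A y v) :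
    ∃ W, v ∈ W ∧ IsDitrail A (y :: W ++ [x]) ∧
      ∀ e ∈ arcList (y :: W ++ [x]), e.1 ∉ U ∨ e.2 ∉ U := by
  obtain ⟨hx, W, hhead, hnodup, hW, hwalk⟩ := h
  obtain ⟨W, rfl⟩ := List.head?_eq_some_iff.1 hhead
  refine ⟨v :: W, List.mem_cons_self, ⟨⟨hyv, hwalk⟩, nodup_arcList_of_nodup_tail ?_⟩, ?_⟩
  · exact List.concat_eq_append ▸ hnodup.concat fun hxW => hW x hxW hx
  · intro e he
    rcases List.mem_cons.1 he with rfl | he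
    · exact .inr (hW v List.mem_cons_self)
    · have hfst : e.1 ∈ (v :: W ++ [x]).dropLast :=
        map_fst_arcList (v :: W ++ [x]) ▸ List.mem_map_of_mem he
      rw [List.dropLast_concat] at hfst
      exact .inl (hW e.1 hfst)

theorem IsClosedDitrail.exists_forall_mem_insert_of_arc {S : Set V} {T : List V} {s v : V}
    (hT : IsClosedDitrail A T) (hST : ∀ u ∈ S, u ∈ T) (hs : s ∈ T) (hsv : A s v)
    (hvs : DiReach A v s) (hsemi : ∀ u ∈ S, A u v ∨ A v u) :
    ∃ T', IsClosedDitrail A T' ∧ ∀ u ∈ insert v S, u ∈ T' := by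
  by_cases hv : v ∈ T
  · exact ⟨T, hT, Set.forall_mem_insert.2 ⟨hv, hST⟩⟩
  obtain ⟨l, hl, hmem⟩ := hT.exists_rotate hs
  have hentry : ∃ x ∈ s :: l, EntersAt A {u | u ∈ T} v x := by
    obtain ⟨x, hx⟩ := hvs.exists_entersAt (U := {u | u ∈ T}) hv hs
    exact ⟨x, (hmem x).2 hx.1, hx⟩
  obtain ⟨p, x, q, r, y, m, hsplit, hseg, hyv, hx, hm⟩ :=
    exists_segment_last_to_first (P := (A · v)) hsv hentry
  rw [hsplit] at hl hmem
  obtain ⟨W, hvW, hW, hleaves⟩ := hx.exists_ear hyv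
  have hnew : (arcList (y :: W ++ [x])).Disjoint (arcList (p ++ x :: q)) := fun e he heT =>
    have ⟨h₁, h₂⟩ := mem_of_mem_arcList heT
    (hleaves e he).elim (· ((hmem _).1 h₁)) (· ((hmem _).1 h₂))
  refine ⟨_, hl.replace_segment hseg hW hnew, Set.forall_mem_insert.2 ⟨by simp [hvW], ?_⟩⟩
  intro u hu
  have hum : u ∈ m → u = x := fun h =>
    hm u h ((hsemi u hu).imp_right (EntersAt.of_arc hv (hST u hu)))
  have huT : u ∈ r ++ y :: m ++ q := by
    rw [← hseg, List.append_assoc]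
    exact (hmem u).2 (hST u hu)
  simp only [List.mem_append, List.mem_cons] at huT ⊢
  tauto

theorem IsClosedDitrail.exists_forall_mem_insert {S : Set V} {T : List V} {v : V}
    (hT : IsClosedDitrail A T) (hST : ∀ u ∈ S, u ∈ T) (hS : S.Nonempty)
    (hv : ∀ u ∈ S, (A u v ∨ A v u) ∧ DiReach A u v ∧ DiReach A v u) :
    ∃ T', IsClosedDitrail A T' ∧ ∀ u ∈ insert v S, u ∈ T' := by
  obtain ⟨s, hs⟩ := hS
  obtain ⟨hadj, hsv, hvs⟩ := hv s hs
  rcases hadj with harc | harc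
  · exact hT.exists_forall_mem_insert_of_arc hST (hST s hs) harc hvs fun u hu => (hv u hu).1
  · obtain ⟨T', hT', hmem⟩ := (isClosedDitrail_flip_reverse.2 hT).exists_forall_mem_insert_of_arc
      (fun u hu => List.mem_reverse.2 (hST u hu)) (List.mem_reverse.2 (hST s hs)) harc
      hsv.reverse fun u hu => (hv u hu).1.symm
    exact ⟨T'.reverse, isClosedDitrail_flip_reverse.1 (by rwa [List.reverse_reverse]),
      fun u hu => List.mem_reverse.2 (hmem u hu)⟩

end Ditrails

theorem stmt_11_general {V : Type*} {A : V → V → Prop} {S : Set V} (hS : S.Finite)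
    (hsemi : S.Pairwise fun u v => A u v ∨ A v u) (hstrong : S.Pairwise (DiReach A)) :
    ∃ l : List V, IsClosedDitrail A l ∧ ∀ v ∈ S, v ∈ l := by
  induction S, hS using Set.Finite.induction_on with
  | empty => exact ⟨[], by simp [IsClosedDitrail, IsDitrail, IsDiwalk, arcList]⟩
  | @insert v S hv _ ih =>
    obtain ⟨hsemiS, hadj⟩ := Set.pairwise_insert.1 hsemi
    obtain ⟨hstrongS, hreach⟩ := Set.pairwise_insert.1 hstrong
    obtain ⟨T, hT, hST⟩ := ih hsemiS hstrongS
    have hne : ∀ u ∈ S, v ≠ u := fun u hu h => hv (h ▸ hu)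
    rcases S.eq_empty_or_nonempty with rfl | hS
    · exact ⟨[v], by simp [IsClosedDitrail, IsDitrail, IsDiwalk, arcList]⟩
    · exact hT.exists_forall_mem_insert hST hS fun u hu =>
        ⟨(hadj u hu (hne u hu)).2, (hreach u hu (hne u hu)).2, (hreach u hu (hne u hu)).1⟩

/-- if `D⟨S⟩` is semicomplete, `D` is `S`-strong and some closed
ditrail meets `S`, then some closed ditrail contains all of `S`. -/
theorem stmt_11 {V : Type*} [Fintype V] (A : V → V → Prop) (hirr : ∀ v, ¬ A v v)
    (S : Set V)
    (hsemi : ∀ u ∈ S, ∀ v ∈ S, u ≠ v → A u v ∨ A v u)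
    (hstrong : ∀ u ∈ S, ∀ v ∈ S, u ≠ v → DiReach A u v)
    (hQ : ∃ l : List V, IsClosedDitrail A l ∧ ∃ v ∈ S, v ∈ l) :
    ∃ l : List V, IsClosedDitrail A l ∧ ∀ v ∈ S, v ∈ l :=
  stmt_11_general S.toFinite (fun u hu v hv => hsemi u hu v hv) fun u hu v hv => hstrong u hu v hv
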